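/- Let a, b, c ∈ ℂ \ (1/2)ℤ with a+b−c ∈ {0,1,…,n−1}, and let u, v, t ∈ {0,…,n−1} be integers with u+v−t = a+b−c. Then C^{n−1−a, c, b}_{n−1−u, t, v} · ξ^{−a(n−1)} · ξ^{(n−1)u} = C^{c, n−1−b, a}_{t, n−1−v, u} · ξ^{−(n−1−b)(n−1)} · ξ^{(n−1)(n−1−v)}. -/

import Mathlib

open Complex Finset Filter
open scoped Matrix Kronecker Real

noncomputable section

/-- `ξ^a = exp(π √-1 a / n)` for the `2n`-th root of unity `ξ = exp(π √-1/n)`. -/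
def xic (n : ℕ) (a : ℂ) : ℂ := Complex.exp (Real.pi * Complex.I * a / n)

/-- `{a} = ξ^a - ξ^{-a}`. -/
def qn (n : ℕ) (a : ℂ) : ℂ := xic n a - xic n (-a)

/-- `{k}! = {1}{2}⋯{k}`. -/
def qfac (n : ℕ) (k : ℕ) : ℂ := ∏ j ∈ Finset.range k, qn n ((j : ℂ) + 1)

-- The quantum binomial `[a¦b]`, defined (and nonzero) only when `a - b ∈ {0,1,…,n-1}`.
open Classical in
def qbin (n : ℕ) (a b : ℂ) : ℂ :=
  if h : ∃ k : ℕ, k < n ∧ a - b = (k : ℂ) then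
    ∏ j ∈ Finset.range h.choose, qn n (a - (j : ℂ)) / qn n (a - b - (j : ℂ))
  else 0

/-- `[a] = {a}/{1}`. -/
def qint (n : ℕ) (a : ℂ) : ℂ := qn n a / qn n 1

/-- `a` is not a half-integer. -/
def NotHalfInt (a : ℂ) : Prop := ∀ m : ℤ, a ≠ (m : ℂ) / 2

/-- `x ∈ {0, 1, …, n-1}` (as a complex number). -/
def InZn (n : ℕ) (x : ℂ) : Prop := ∃ k : ℕ, k < n ∧ x = (k : ℂ)

/-- The matrix of `E` on `V^a = ℂ^n`: `E e_j = [j] e_{j-1}` (independent of `a`). -/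
def Emat (n : ℕ) : Matrix (Fin n) (Fin n) ℂ :=
  Matrix.of fun i j => if (j : ℕ) = (i : ℕ) + 1 then qint n ((j : ℕ) : ℂ) else 0

/-- The matrix of `F` on `V^a`: `F e_j = [2a-j] e_{j+1}` (with `e_n = 0`). -/
def Fmat (n : ℕ) (a : ℂ) : Matrix (Fin n) (Fin n) ℂ :=
  Matrix.of fun i j => if (i : ℕ) = (j : ℕ) + 1 then qint n (2 * a - ((j : ℕ) : ℂ)) else 0

/-- The matrix of `K` on `V^a`: `K e_j = ξ^{a-j} e_j`. -/
def Kmat (n : ℕ) (a : ℂ) : Matrix (Fin n) (Fin n) ℂ :=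
  Matrix.of fun i j => if i = j then xic n (a - ((i : ℕ) : ℂ)) else 0

/-- The matrix of `K⁻¹` on `V^a`. -/
def Kinvmat (n : ℕ) (a : ℂ) : Matrix (Fin n) (Fin n) ℂ :=
  Matrix.of fun i j => if i = j then xic n (-(a - ((i : ℕ) : ℂ))) else 0

/-- The `R`-matrix `R_{a,b} : V^a ⊗ V^b → V^b ⊗ V^a`:
`R(e_u ⊗ e_v) = Σ_m {m}! ξ^{2(a-u)(b-v) - m(a-b-u+v) - m(m+1)/2} [u¦u-m] [2b-v¦2b-v-m]
e_{v+m} ⊗ e_{u-m}`; the entry at row `(h,k)`, column `(u,v)` is the coefficient of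
`e_h ⊗ e_k`, nonzero only when `h + k = u + v` and `h ≥ v` (with `m = h - v`). -/
def Rmat (n : ℕ) (a b : ℂ) : Matrix (Fin n × Fin n) (Fin n × Fin n) ℂ :=
  Matrix.of fun p q =>
    if ((p.1 : ℕ) + (p.2 : ℕ) = (q.1 : ℕ) + (q.2 : ℕ)) ∧ ((q.2 : ℕ) ≤ (p.1 : ℕ)) then
      (fun m : ℕ =>
        qfac n m *
        xic n (2 * (a - ((q.1 : ℕ) : ℂ)) * (b - ((q.2 : ℕ) : ℂ))
            - (m : ℂ) * (a - b - ((q.1 : ℕ) : ℂ) + ((q.2 : ℕ) : ℂ))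
            - (m : ℂ) * ((m : ℂ) + 1) / 2) *
        qbin n ((q.1 : ℕ) : ℂ) (((q.1 : ℕ) : ℂ) - (m : ℂ)) *
        qbin n (2 * b - ((q.2 : ℕ) : ℂ)) (2 * b - ((q.2 : ℕ) : ℂ) - (m : ℂ)))
      ((p.1 : ℕ) - (q.2 : ℕ))
    else 0

/-- The Clebsch-Gordan quantum coefficient `C^{a,b,c}_{u,v,t}`. -/
def CG (n : ℕ) (a b c : ℂ) (u v t : ℕ) : ℂ :=
  Complex.exp (Real.pi * Complex.I * (c - a - b) / 2) *
  (-1 : ℂ) ^ ((v : ℤ) - (t : ℤ)) *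
  xic n (((v : ℂ) * (2 * b - (v : ℂ) + 1) - (u : ℂ) * (2 * a - (u : ℂ) + 1)) / 2) *
  (qbin n (2 * c) (2 * c - (t : ℂ)))⁻¹ *
  qbin n (2 * c) (a + b + c - ((n : ℂ) - 1)) *
  ∑ z ∈ Finset.range (t + 1),
    (-1 : ℂ) ^ z * xic n ((2 * (z : ℂ) - (t : ℂ)) * (2 * c - (t : ℂ) + 1) / 2) *
    qbin n (a + b - c) ((u : ℂ) - (z : ℂ)) *
    qbin n (2 * a - (u : ℂ) + (z : ℂ)) (2 * a - (u : ℂ)) *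
    qbin n (2 * b - (v : ℂ) + ((t : ℂ) - (z : ℂ))) (2 * b - (v : ℂ))

-- The inclusion `Y_c^{a,b} : V^c → V^a ⊗ V^b`.
open Classical in
def Yinc (n : ℕ) (a b c : ℂ) : Matrix (Fin n × Fin n) (Fin n) ℂ :=
  Matrix.of fun p t =>
    if ((p.1 : ℕ) : ℂ) + ((p.2 : ℕ) : ℂ) - ((t : ℕ) : ℂ) = a + b - c then
      CG n a b c (p.1 : ℕ) (p.2 : ℕ) (t : ℕ)
    else 0

-- The projection `Y_{a,b}^c : V^a ⊗ V^b → V^c`.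
open Classical in
def Yproj (n : ℕ) (a b c : ℂ) : Matrix (Fin n) (Fin n × Fin n) ℂ :=
  Matrix.of fun t p =>
    if ((p.1 : ℕ) : ℂ) + ((p.2 : ℕ) : ℂ) - ((t : ℕ) : ℂ) = a + b - c then
      CG n ((n : ℂ) - 1 - b) ((n : ℂ) - 1 - a) ((n : ℂ) - 1 - c)
        (n - 1 - (p.2 : ℕ)) (n - 1 - (p.1 : ℕ)) (n - 1 - (t : ℕ))
    else 0

-- Extracts the natural number `k` with `x = k` (0 if there is none).
open Classical in
def natIdx (x : ℂ) : ℕ := if h : ∃ k : ℕ, x = (k : ℂ) then h.choose else 0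

/-- The `SL(2,ℂ)` quantum 6j-symbol `{a b e; d c f}_ξ`. -/
def sixj (n : ℕ) (a b e d c f : ℂ) : ℂ :=
  (-1 : ℂ) ^ (n - 1 + natIdx (a + f - c)) *
  (qbin n (2 * f + (n : ℂ)) (2 * f + 1))⁻¹ *
  (qfac n (natIdx (d + e - c)) * qfac n (natIdx (a + b - e)) /
    (qfac n (natIdx (b + d - f)) * qfac n (natIdx (a + f - c)))) *
  qbin n (2 * e) (a + b + e + 1 - (n : ℂ)) *
  (qbin n (2 * e) (e + c - d))⁻¹ *
  ∑ z ∈ Finset.Icc (natIdx (d + e - c) - natIdx (b + d - f))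
      (min (natIdx (d + e - c)) (natIdx (a + f - c))),
    (-1 : ℂ) ^ z * qbin n (a + f + c + 1) (2 * c + (z : ℂ) + 1) *
    qbin n ((a + c - f) + (z : ℂ)) (a + c - f) *
    qbin n ((b + f - d) + (d + e - c) - (z : ℂ)) (b + f - d) *
    qbin n ((d + c - e) + (z : ℂ)) (d + f - b)

/-- The tetrahedral symbol `{a b e; d c f}_tet = {a b e; d c f}_ξ · [2f+n¦2f+1]`. -/
def sixjtet (n : ℕ) (a b e d c f : ℂ) : ℂ :=
  sixj n a b e d c f * qbin n (2 * f + (n : ℂ)) (2 * f + 1)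

/-- The Lobachevsky function `Λ(x) = -∫_0^x log|2 sin t| dt`. -/
def lob (x : ℝ) : ℝ := -∫ t in (0 : ℝ)..x, Real.log |2 * Real.sin t|

/-- A triple of integers is admissible. -/
def Admissible (n : ℕ) (i j k : ℤ) : Prop :=
  0 < i ∧ 0 < j ∧ 0 < k ∧ i < (n : ℤ) - 1 ∧ j < (n : ℤ) - 1 ∧ k < (n : ℤ) - 1 ∧
  (n : ℤ) - 1 < i + j + k ∧ i + j + k < 2 * ((n : ℤ) - 1) ∧
  0 < i + j - k ∧ 0 < j + k - i ∧ 0 < k + i - j ∧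
  i + j - k < (n : ℤ) - 1 ∧ j + k - i < (n : ℤ) - 1 ∧ k + i - j < (n : ℤ) - 1

/-!
With `k = a + b - c`, both sides are multiples of `Σ_{i+j=k} (-1)^j ξ^{jθ} [u¦i] [2b-v¦i] [v¦j]
[2a-u¦j] {i}!{j}!/{k}!`, where `θ = 2a + 2b - k + 1` and `[x¦i]` denotes a binomial with `i`
factors. Indeed `{n - x} = {x}` removes the complements `n - 1 - x` from either coefficient and
leaves a sum over `z` of terms `(-1)^z [u+z¦k] [2a-u¦z] ⋯`; expanding `[u+z¦k]` by the
`q`-Vandermonde identity makes the sum over `z` an alternating `q`-Vandermonde sum. That identity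
holds with phases `ξ` and with phases `ξ⁻¹`. The two coefficients need opposite choices, and so
give `θ` and `-θ`, which are exchanged, up to a scalar, by swapping the two pairs of binomials.
The scalars that remain agree because `ξ^{2n} = 1`.
-/

lemma neg_one_pow_eq_of_add_eq {R : Type*} [Ring R] {i j k : ℕ} (h : i + j = k) :
    (-1 : R) ^ j = (-1) ^ k * (-1) ^ i := by
  rw [← h, ← pow_add, add_right_comm, pow_add _ (i + i), (Even.add_self i).neg_one_pow, one_mul]

lemma xic_zero (n : ℕ) : xic n 0 = 1 := by simp [xic]

lemma xic_add (n : ℕ) (x y : ℂ) : xic n (x + y) = xic n x * xic n y := by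
  rw [xic, xic, xic, ← Complex.exp_add]
  congr 1
  ring

lemma xic_mul_intCast {n : ℕ} (hn : n ≠ 0) (m : ℤ) : xic n (n * m) = (-1) ^ m := by
  have hn' : (n : ℂ) ≠ 0 := Nat.cast_ne_zero.mpr hn
  rw [xic, ← Complex.exp_pi_mul_I, ← Complex.exp_int_mul]
  congr 1
  field_simp

lemma xic_mul_natCast {n : ℕ} (hn : n ≠ 0) (m : ℕ) : xic n (n * m) = (-1) ^ m :=
  mod_cast xic_mul_intCast hn m

lemma xic_add_two_mul_intCast {n : ℕ} (hn : n ≠ 0) (x : ℂ) (m : ℤ) :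
    xic n (x + n * (2 * m)) = xic n x := by
  have h := xic_mul_intCast hn (2 * m)
  rw [(even_two_mul m).neg_one_zpow] at h
  push_cast at h
  rw [xic_add, h, mul_one]

lemma qn_eq_two_I_mul_sin (n : ℕ) (x : ℂ) :
    qn n x = 2 * Complex.I * Complex.sin (Real.pi * x / n) := by
  rw [qn, xic, xic, Complex.sin,
    show Real.pi * Complex.I * x / n = Real.pi * x / n * Complex.I by ring,
    show Real.pi * Complex.I * -x / n = -(Real.pi * x / n) * Complex.I by ring]
  linear_combination (Complex.exp (Real.pi * x / n * Complex.I) -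
    Complex.exp (-(Real.pi * x / n) * Complex.I)) * Complex.I_sq

lemma qn_zero (n : ℕ) : qn n 0 = 0 := by simp [qn]

lemma qn_neg (n : ℕ) (x : ℂ) : qn n (-x) = -qn n x := by
  rw [qn, qn, neg_neg, neg_sub]

lemma qn_natCast_sub {n : ℕ} (hn : n ≠ 0) (x : ℂ) : qn n (n - x) = qn n x := by
  have hn' : (n : ℂ) ≠ 0 := Nat.cast_ne_zero.mpr hn
  rw [qn_eq_two_I_mul_sin, qn_eq_two_I_mul_sin, ← Complex.sin_pi_sub (Real.pi * x / n)]
  congr 2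
  field_simp

lemma qn_add (n : ℕ) (x y : ℂ) : qn n (x + y) = xic n (-y) * qn n x + xic n x * qn n y := by
  rw [qn, qn, qn, neg_add, xic_add, xic_add]
  ring

lemma qn_eq_zero_iff {n : ℕ} (hn : n ≠ 0) {x : ℂ} : qn n x = 0 ↔ ∃ m : ℤ, x = n * m := by
  have hn' : (n : ℂ) ≠ 0 := Nat.cast_ne_zero.mpr hn
  have hpi : (Real.pi : ℂ) ≠ 0 := Complex.ofReal_ne_zero.mpr Real.pi_ne_zero
  rw [qn_eq_two_I_mul_sin, mul_eq_zero_iff_left (mul_ne_zero two_ne_zero Complex.I_ne_zero),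
    Complex.sin_eq_zero_iff]
  refine exists_congr fun m => ?_
  rw [div_eq_iff hn', show (m : ℂ) * Real.pi * n = Real.pi * (n * m) by ring,
    mul_right_inj' hpi]

lemma qn_natCast_add_one_ne_zero {n m : ℕ} (h : m + 1 < n) : qn n (m + 1) ≠ 0 := by
  rw [Ne, qn_eq_zero_iff (by omega)]
  rintro ⟨k, hk⟩
  have hdvd : (n : ℤ) ∣ m + 1 := ⟨k, by exact_mod_cast hk⟩
  have := Int.le_of_dvd (by omega) hdvd
  omega

lemma qfac_succ (n m : ℕ) : qfac n (m + 1) = qfac n m * qn n (m + 1) :=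
  Finset.prod_range_succ _ _

lemma qfac_ne_zero {n m : ℕ} (h : m < n) : qfac n m ≠ 0 :=
  Finset.prod_ne_zero_iff.mpr fun j hj =>
    qn_natCast_add_one_ne_zero (by have := Finset.mem_range.mp hj; omega)

/-- The quantum falling factorial `{x, x - m} = {x}{x - 1}⋯{x - m + 1}`. -/
def qdescFactorial (n : ℕ) (x : ℂ) (m : ℕ) : ℂ := ∏ j ∈ Finset.range m, qn n (x - j)

/-- The quantum binomial `[x¦x - m]`, indexed by the length `m` rather than by the lower entry:
unlike `qbin` it is given by one formula for every `m`, so that it obeys recursions in `m`.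
For `m ≥ n` it is `0` by division by zero. -/
def qchoose (n : ℕ) (x : ℂ) (m : ℕ) : ℂ := qdescFactorial n x m / qfac n m

lemma qdescFactorial_succ (n : ℕ) (x : ℂ) (m : ℕ) :
    qdescFactorial n x (m + 1) = qdescFactorial n x m * qn n (x - m) :=
  Finset.prod_range_succ _ _

lemma qdescFactorial_add (n : ℕ) (x : ℂ) (m p : ℕ) :
    qdescFactorial n x (m + p) = qdescFactorial n x m * qdescFactorial n (x - m) p := by
  simp only [qdescFactorial, Finset.prod_range_add, Nat.cast_add, sub_add_eq_sub_sub]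

lemma qdescFactorial_eq_prod_ascending (n : ℕ) (x : ℂ) (m : ℕ) :
    qdescFactorial n x m = ∏ j ∈ Finset.range m, qn n (x - m + 1 + j) := by
  rw [qdescFactorial, ← Finset.prod_range_reflect]
  refine Finset.prod_congr rfl fun j hj => ?_
  have hj := Finset.mem_range.mp hj
  rw [Nat.sub_sub, Nat.cast_sub (by omega)]
  congr 1
  push_cast
  ring

lemma qdescFactorial_self (n m : ℕ) : qdescFactorial n m m = qfac n m := by
  rw [qdescFactorial_eq_prod_ascending, qfac]
  exact Finset.prod_congr rfl fun j _ => by congr 1; ring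

lemma qdescFactorial_mul_qfac (n m p : ℕ) :
    qdescFactorial n (m + p : ℕ) m * qfac n p = qfac n (m + p) := by
  rw [← qdescFactorial_self n (m + p), qdescFactorial_add]
  congr 1
  rw [Nat.cast_add, add_sub_cancel_left, qdescFactorial_self]

lemma qdescFactorial_natCast_eq_zero (n : ℕ) {N m : ℕ} (h : N < m) :
    qdescFactorial n N m = 0 :=
  Finset.prod_eq_zero (Finset.mem_range.mpr h) (by rw [sub_self, qn_zero])

lemma qdescFactorial_natCast_eq_zero_of_le {n N m : ℕ} (hn : n ≠ 0) (hnN : n ≤ N)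
    (hNm : N < n + m) : qdescFactorial n N m = 0 := by
  refine Finset.prod_eq_zero (Finset.mem_range.mpr (show N - n < m by omega)) ?_
  rw [Nat.cast_sub hnN, sub_sub_cancel, qn_eq_zero_iff hn]
  exact ⟨1, by simp⟩

lemma qdescFactorial_sub_one_sub (n : ℕ) (x : ℂ) (m : ℕ) :
    qdescFactorial n (m - 1 - x) m = (-1) ^ m * qdescFactorial n x m := by
  have hneg : ∀ j ∈ Finset.range m, qn n (m - 1 - x - m + 1 + j) = -qn n (x - j) :=
    fun j _ => by rw [← qn_neg]; congr 1; ring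
  rw [qdescFactorial_eq_prod_ascending, Finset.prod_congr rfl hneg, Finset.prod_neg,
    Finset.card_range, qdescFactorial]

lemma qdescFactorial_natCast_add_sub {n : ℕ} (hn : n ≠ 0) (x : ℂ) (m : ℕ) :
    qdescFactorial n (n + m - 1 - x) m = qdescFactorial n x m := by
  rw [qdescFactorial_eq_prod_ascending, qdescFactorial]
  refine Finset.prod_congr rfl fun j _ => ?_
  rw [← qn_natCast_sub hn]
  congr 1
  ring

lemma qchoose_zero (n : ℕ) (x : ℂ) : qchoose n x 0 = 1 := by
  simp [qchoose, qdescFactorial, qfac]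

lemma qn_mul_qchoose_succ {n m : ℕ} (hm : m + 1 < n) (x : ℂ) :
    qn n (m + 1) * qchoose n x (m + 1) = qchoose n x m * qn n (x - m) := by
  have := qfac_ne_zero (Nat.lt_of_succ_lt hm)
  have := qn_natCast_add_one_ne_zero hm
  rw [qchoose, qchoose, qdescFactorial_succ, qfac_succ]
  field_simp

lemma qchoose_natCast_eq_zero (n : ℕ) {N m : ℕ} (h : N < m) : qchoose n N m = 0 := by
  rw [qchoose, qdescFactorial_natCast_eq_zero n h, zero_div]

lemma qchoose_sub_one_sub (n : ℕ) (x : ℂ) (m : ℕ) :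
    qchoose n (m - 1 - x) m = (-1) ^ m * qchoose n x m := by
  rw [qchoose, qdescFactorial_sub_one_sub, mul_div_assoc, qchoose]

lemma qchoose_natCast_add_sub {n : ℕ} (hn : n ≠ 0) (x : ℂ) (m : ℕ) :
    qchoose n (n + m - 1 - x) m = qchoose n x m := by
  rw [qchoose, qdescFactorial_natCast_add_sub hn, qchoose]

lemma qchoose_symm {n i j : ℕ} (hi : i < n) (hj : j < n) :
    qchoose n (i + j : ℕ) i = qchoose n (i + j : ℕ) j := by
  rw [qchoose, qchoose, div_eq_div_iff (qfac_ne_zero hi) (qfac_ne_zero hj),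
    qdescFactorial_mul_qfac, add_comm i j, qdescFactorial_mul_qfac]

lemma qchoose_mul_qchoose_sub {n i j : ℕ} (h : i + j < n) (x : ℂ) :
    qchoose n x i * qchoose n (x - i) j = qchoose n (i + j : ℕ) i * qchoose n x (i + j) := by
  have hi := qfac_ne_zero (show i < n by omega)
  have hj := qfac_ne_zero (show j < n by omega)
  have hij := qfac_ne_zero h
  simp only [qchoose, qdescFactorial_add n x]
  field_simp
  linear_combination qdescFactorial n x i * qdescFactorial n (x - i) j *
    -qdescFactorial_mul_qfac n i j

lemma qchoose_ne_zero_of_notHalfInt {n m : ℕ} (hm : m < n) {a : ℂ} (ha : NotHalfInt a) :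
    qchoose n (2 * a) m ≠ 0 := by
  refine div_ne_zero (Finset.prod_ne_zero_iff.mpr fun j _ h0 => ?_) (qfac_ne_zero hm)
  obtain ⟨l, hl⟩ := (qn_eq_zero_iff (by omega)).mp h0
  refine ha (n * l + j) ?_
  push_cast
  linear_combination hl / 2

lemma qbin_eq_qchoose {n m : ℕ} {x y : ℂ} (hm : m < n) (h : x - y = m) :
    qbin n x y = qchoose n x m := by
  have hex : ∃ k : ℕ, k < n ∧ x - y = (k : ℂ) := ⟨m, hm, h⟩
  have hchoose : hex.choose = m := Nat.cast_injective (hex.choose_spec.2.symm.trans h)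
  rw [qbin, dif_pos hex, hchoose, Finset.prod_div_distrib, h, qchoose, ← qdescFactorial_self]
  rfl

lemma qbin_eq_zero {n : ℕ} {x y : ℂ} (h : ∀ m : ℕ, m < n → x - y ≠ m) : qbin n x y = 0 :=
  dif_neg fun ⟨m, hm, hxy⟩ => h m hm hxy

lemma qbin_ne_zero_of_notHalfInt {n m : ℕ} (hm : m < n) {a : ℂ} (ha : NotHalfInt a) :
    qbin n (2 * a) (2 * a - m) ≠ 0 := by
  rw [qbin_eq_qchoose hm (sub_sub_cancel _ _)]
  exact qchoose_ne_zero_of_notHalfInt hm ha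

lemma qbin_compl_compl {n k N : ℕ} (hk : k < n) (hN : N < k + n) :
    qbin n (n - 1 - k) (n - 1 - N) = qchoose n N k := by
  rcases le_or_gt k N with hkN | hkN
  · obtain ⟨m, rfl⟩ := Nat.exists_eq_add_of_le hkN
    have hm : m < n := by omega
    rw [qbin_eq_qchoose hm (by push_cast; ring), qchoose_symm hk hm,
      ← qchoose_natCast_add_sub (by omega)]
    congr 1
    push_cast
    ring
  · rw [qchoose_natCast_eq_zero n hkN]
    refine qbin_eq_zero fun m _ hm => ?_
    have : N = k + m := by
      have : (N : ℂ) = k + m := by linear_combination hm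
      exact_mod_cast this
    omega

lemma natCast_compl {n u : ℕ} (hu : u < n) : ((n - 1 - u : ℕ) : ℂ) = n - 1 - u := by
  rw [Nat.sub_sub, Nat.cast_sub (by omega)]
  push_cast
  ring

lemma qbin_compl_sub {n k N : ℕ} (hk : k < n) (hN : N < k + n) :
    qbin n (n - 1 - k) (N - k) = qchoose n N k := by
  rcases le_or_gt n N with hnN | hNn
  · rw [qchoose, qdescFactorial_natCast_eq_zero_of_le (by omega) hnN (by omega), zero_div]
    refine qbin_eq_zero fun m _ hm => ?_
    have : n = N + m + 1 := by
      have : (n : ℂ) = N + m + 1 := by linear_combination hm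
      exact_mod_cast this
    omega
  obtain ⟨m, hm⟩ := Nat.exists_eq_add_of_lt hNn
  have hnC : (n : ℂ) = N + m + 1 := by exact_mod_cast hm
  rw [qbin_eq_qchoose (m := m) (by omega) (by linear_combination hnC)]
  rcases le_or_gt k N with hkN | hkN
  · obtain ⟨i, rfl⟩ := Nat.exists_eq_add_of_le hkN
    have hcompl : (n : ℂ) - 1 - k = (i + m : ℕ) := by
      push_cast at hnC ⊢
      linear_combination hnC
    rw [hcompl, ← qchoose_symm (by omega) (by omega), ← hcompl, qchoose_symm hk (by omega),
      ← qchoose_natCast_add_sub (by omega)]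
    congr 1
    push_cast
    ring
  · rw [← natCast_compl hk, qchoose_natCast_eq_zero n (by omega), qchoose_natCast_eq_zero n hkN]

lemma xic_mul_qchoose_mul_qchoose_mul_qn {n i j : ℕ} (hi : i + 1 < n) (hj : j + 1 < n)
    (x y : ℂ) :
    xic n (x * j - y * i) * qchoose n x i * qchoose n y j * qn n (x + y - (i + j)) =
      xic n j * qn n (i + 1) *
          (xic n (x * j - y * (i + 1)) * qchoose n x (i + 1) * qchoose n y j) +
        xic n (-i) * qn n (j + 1) *
          (xic n (x * (j + 1) - y * i) * qchoose n x i * qchoose n y (j + 1)) := by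
  have hx := qn_mul_qchoose_succ hi x
  have hy := qn_mul_qchoose_succ hj y
  have hphase₁ : xic n j * xic n (x * j - y * (i + 1)) =
      xic n (x * j - y * i) * xic n (-(y - j)) := by
    rw [← xic_add, ← xic_add]
    congr 1
    ring
  have hphase₂ : xic n (-i) * xic n (x * (j + 1) - y * i) =
      xic n (x * j - y * i) * xic n (x - i) := by
    rw [← xic_add, ← xic_add]
    congr 1
    ring
  rw [add_sub_add_comm, qn_add]
  linear_combination -(xic n (x * j - y * i) * xic n (-(y - j)) * qchoose n y j) * hx -
    xic n (x * j - y * i) * xic n (x - i) * qchoose n x i * hy -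
    qn n (i + 1) * qchoose n x (i + 1) * qchoose n y j * hphase₁ -
    qn n (j + 1) * qchoose n x i * qchoose n y (j + 1) * hphase₂

lemma qchoose_add_eq_sum {n m : ℕ} (hm : m < n) (x y : ℂ) :
    qchoose n (x + y) m = ∑ p ∈ antidiagonal m,
      xic n (x * p.2 - y * p.1) * qchoose n x p.1 * qchoose n y p.2 := by
  induction m with
  | zero => simp [qchoose_zero, xic_zero]
  | succ m ih =>
    set f : ℕ × ℕ → ℂ := fun p =>
      xic n (x * p.2 - y * p.1) * qchoose n x p.1 * qchoose n y p.2 with hf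
    have split_left : ∀ p ∈ antidiagonal m, f p * qn n (x + y - m) =
        xic n p.2 * qn n (p.1 + 1 : ℕ) * f (p.1 + 1, p.2) +
          xic n (-p.1) * qn n (p.2 + 1 : ℕ) * f (p.1, p.2 + 1) := by
      rintro ⟨i, j⟩ hij
      have hij : i + j = m := mem_antidiagonal.mp hij
      simp only [hf, ← hij, Nat.cast_add, Nat.cast_one]
      exact xic_mul_qchoose_mul_qchoose_mul_qn (by omega) (by omega) x y
    have split_right : ∀ p ∈ antidiagonal (m + 1), qn n (m + 1 : ℕ) * f p =
        xic n p.2 * qn n p.1 * f p + xic n (-p.1) * qn n p.2 * f p := by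
      rintro ⟨i, j⟩ hij
      rw [← mem_antidiagonal.mp hij, Nat.cast_add, add_comm, qn_add]
      ring
    refine mul_left_cancel₀ (qn_natCast_add_one_ne_zero hm) ?_
    rw [qn_mul_qchoose_succ hm, ih (by omega), Finset.sum_mul, Finset.sum_congr rfl split_left,
      Finset.sum_add_distrib, Finset.mul_sum, ← Nat.cast_succ, Finset.sum_congr rfl split_right,
      Finset.sum_add_distrib, Finset.Nat.sum_antidiagonal_succ,
      Finset.Nat.sum_antidiagonal_succ' (n := m)]
    simp only [Nat.cast_zero, qn_zero, mul_zero, zero_mul, zero_add]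

lemma qchoose_add_eq_sum_units {n m : ℕ} (hm : m < n) (ε : ℤˣ) (x y : ℂ) :
    qchoose n (x + y) m = ∑ p ∈ antidiagonal m,
      xic n ((ε : ℤ) * (x * p.2 - y * p.1)) * qchoose n x p.1 * qchoose n y p.2 := by
  rcases Int.units_eq_one_or ε with rfl | rfl
  · simpa using qchoose_add_eq_sum hm x y
  · rw [add_comm, qchoose_add_eq_sum hm, ← Finset.Nat.sum_antidiagonal_swap]
    refine Finset.sum_congr rfl fun p _ => ?_
    simp only [Prod.fst_swap, Prod.snd_swap, Units.val_neg, Units.val_one, Int.cast_neg,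
      Int.cast_one, neg_one_mul, neg_sub]
    ring

lemma sum_neg_one_pow_mul_qchoose_mul_qchoose {n p : ℕ} (hp : p < n) (ε : ℤˣ) (x y : ℂ) :
    ∑ q ∈ antidiagonal p, (-1) ^ q.1 * xic n ((ε : ℤ) * (x * q.2 + (y + 1) * q.1)) *
        qchoose n x q.1 * qchoose n (y + q.2) q.2 = qchoose n (y - x + p) p := by
  have hupper : qchoose n (y - x + p) p = (-1) ^ p * qchoose n (x + (-y - 1)) p := by
    rw [← qchoose_sub_one_sub]
    congr 1
    ring
  rw [hupper, qchoose_add_eq_sum_units hp ε, Finset.mul_sum]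
  refine Finset.sum_congr rfl fun ⟨i, w⟩ hq => ?_
  have hlower : qchoose n (y + w) w = (-1) ^ w * qchoose n (-y - 1) w := by
    rw [← qchoose_sub_one_sub]
    congr 1
    ring
  have hsign : (-1 : ℂ) ^ p = (-1) ^ i * (-1) ^ w := by
    rw [← pow_add, mem_antidiagonal.mp hq]
  rw [hlower, hsign, show x * w - (-y - 1) * i = x * w + (y + 1) * i by ring]
  ring

lemma sum_antidiagonal_add_of_eq_zero {M : Type*} [AddCommMonoid M] (j p : ℕ) (f : ℕ × ℕ → M)
    (hf : ∀ z w, z < j → f (z, w) = 0) :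
    ∑ q ∈ antidiagonal (j + p), f q = ∑ q ∈ antidiagonal p, f (j + q.1, q.2) := by
  induction j generalizing f with
  | zero => simp
  | succ j ih =>
    rw [Nat.add_right_comm, Finset.Nat.sum_antidiagonal_succ, hf 0 _ j.succ_pos, zero_add,
      ih _ fun z w hz => hf (z + 1) w (Nat.succ_lt_succ hz)]
    simp only [Nat.add_right_comm j]

lemma sum_neg_one_pow_mul_qchoose_mul_qchoose_mul_qchoose {n j p : ℕ} (h : j + p < n) (ε : ℤˣ)
    (x y : ℂ) :
    ∑ q ∈ antidiagonal (j + p),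
        (-1) ^ q.1 * xic n ((ε : ℤ) * ((x - j) * q.2 + (y + 1) * q.1)) *
          qchoose n q.1 j * qchoose n x q.1 * qchoose n (y + q.2) q.2 =
      (-1) ^ j * xic n ((ε : ℤ) * ((y + 1) * j)) * qchoose n x j *
        qchoose n (y - x + (j + p : ℕ)) p := by
  rw [sum_antidiagonal_add_of_eq_zero _ _ _ fun z w hz => by
      rw [qchoose_natCast_eq_zero n hz, mul_zero, zero_mul, zero_mul],
    show y - x + ((j + p : ℕ) : ℂ) = y - (x - j) + p by push_cast; ring,
    ← sum_neg_one_pow_mul_qchoose_mul_qchoose (by omega) ε (x - j) y, Finset.mul_sum]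
  refine Finset.sum_congr rfl fun ⟨i, w⟩ hq => ?_
  have hq : i + w = p := mem_antidiagonal.mp hq
  have hrev := qchoose_mul_qchoose_sub (show j + i < n by omega) x
  have hphase : xic n ((ε : ℤ) * ((x - j) * w + (y + 1) * (j + i : ℕ))) =
      xic n ((ε : ℤ) * ((y + 1) * j)) *
        xic n ((ε : ℤ) * ((x - j) * w + (y + 1) * i)) := by
    rw [← xic_add]
    congr 1
    push_cast
    ring
  dsimp only
  rw [hphase, pow_add]
  linear_combination -((-1) ^ j * (-1) ^ i * xic n ((ε : ℤ) * ((y + 1) * j)) *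
    xic n ((ε : ℤ) * ((x - j) * w + (y + 1) * i)) * qchoose n (y + w) w) * hrev

/-- The symmetric sum `Σ_{i+j=k} (-1)^j ξ^{jθ} [x¦i] [x'¦i] [y¦j] [y'¦j] {i}!{j}!/{k}!` in which
both sides of the bend identity are expressed; here `[x¦i]` stands for `qchoose n x i`. -/
def bendSum (n k : ℕ) (x x' y y' θ : ℂ) : ℂ :=
  ∑ p ∈ antidiagonal k, (-1) ^ p.2 * xic n (p.2 * θ) *
    (qchoose n x p.1 * qchoose n x' p.1 * qchoose n y p.2 * qchoose n y' p.2) *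
    (qfac n p.1 * qfac n p.2 / qfac n k)

lemma bendSum_swap (n k : ℕ) (x x' y y' θ : ℂ) :
    bendSum n k y y' x x' (-θ) = (-1) ^ k * xic n (-(k * θ)) * bendSum n k x x' y y' θ := by
  rw [bendSum, bendSum, ← Finset.Nat.sum_antidiagonal_swap, Finset.mul_sum]
  refine Finset.sum_congr rfl fun ⟨i, j⟩ hp => ?_
  have hk : i + j = k := mem_antidiagonal.mp hp
  have hphase : xic n (i * -θ) = xic n (-(k * θ)) * xic n (j * θ) := by
    rw [← xic_add, ← hk]
    congr 1
    push_cast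
    ring
  simp only [Prod.fst_swap, Prod.snd_swap]
  rw [hphase, neg_one_pow_eq_of_add_eq (show j + i = k by omega)]
  ring

lemma qchoose_mul_qchoose_sub_eq_div {n i j m : ℕ} (hij : i + j < n) (hjm : j + m < n) (x : ℂ) :
    qchoose n x (i + j) * qchoose n (x - (i + j : ℕ)) m =
      qchoose n x (j + m) * (qchoose n (x - (j + m : ℕ)) i * qchoose n (j + m : ℕ) j *
        (qfac n i * qfac n j / qfac n (i + j))) := by
  have hi := qfac_ne_zero (show i < n by omega)
  have hj := qfac_ne_zero (show j < n by omega)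
  have hm := qfac_ne_zero (show m < n by omega)
  have hij := qfac_ne_zero hij
  have hjm := qfac_ne_zero hjm
  have hfall : qdescFactorial n x (i + j) * qdescFactorial n (x - (i + j : ℕ)) m =
      qdescFactorial n x (j + m) * qdescFactorial n (x - (j + m : ℕ)) i := by
    rw [← qdescFactorial_add, ← qdescFactorial_add]
    congr 1
    omega
  have hfac := qdescFactorial_mul_qfac n j m
  simp only [qchoose]
  field_simp
  rw [hfall, ← hfac]
  ring

lemma sum_mul_qchoose_add_eq_sum_antidiagonal {n v k : ℕ} (hk : k < n) (ε : ℤˣ) (u α β : ℂ) :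
    ∑ q ∈ antidiagonal v,
        (-1) ^ q.1 * xic n ((ε : ℤ) * ((q.1 - q.2) * ((β + 1) / 2))) *
          qchoose n (u + q.1) k * qchoose n α q.1 * qchoose n (α + β - k + q.2) q.2 =
      ∑ p ∈ antidiagonal k, xic n ((ε : ℤ) * (u * p.2 - v * ((β + 1) / 2 + α - p.2))) *
        qchoose n u p.1 * ∑ q ∈ antidiagonal v,
          (-1) ^ q.1 * xic n ((ε : ℤ) * ((α - p.2) * q.2 + (α + β - k + 1) * q.1)) *
          qchoose n q.1 p.2 * qchoose n α q.1 * qchoose n (α + β - k + q.2) q.2 := by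
  simp_rw [Finset.mul_sum]
  rw [Finset.sum_comm]
  refine Finset.sum_congr rfl fun ⟨z, w⟩ hq => ?_
  have hv' : (v : ℂ) = z + w := by exact_mod_cast (mem_antidiagonal.mp hq).symm
  rw [qchoose_add_eq_sum_units hk ε, Finset.mul_sum, Finset.sum_mul, Finset.sum_mul]
  refine Finset.sum_congr rfl fun ⟨i, j⟩ hp => ?_
  have hk' : (k : ℂ) = i + j := by exact_mod_cast (mem_antidiagonal.mp hp).symm
  have hphase : xic n ((ε : ℤ) * ((z - w) * ((β + 1) / 2))) * xic n ((ε : ℤ) * (u * j - z * i)) =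
      xic n ((ε : ℤ) * (u * j - v * ((β + 1) / 2 + α - j))) *
        xic n ((ε : ℤ) * ((α - j) * w + (α + β - k + 1) * z)) := by
    rw [← xic_add, ← xic_add, hv', hk']
    congr 1
    ring
  dsimp only
  linear_combination (-1) ^ z * qchoose n u i * qchoose n z j * qchoose n α z *
    qchoose n (α + β - k + w) w * hphase

lemma qchoose_mul_sum_eq_qchoose_mul_bendSum {n v k : ℕ} (hv : v < n) (hk : k < n) (ε : ℤˣ)
    (u α β : ℂ) :
    qchoose n (β + v) k * ∑ q ∈ antidiagonal v,
        (-1) ^ q.1 * xic n ((ε : ℤ) * ((q.1 - q.2) * ((β + 1) / 2))) *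
          qchoose n (u + q.1) k * qchoose n α q.1 * qchoose n (α + β - k + q.2) q.2 =
      qchoose n (β + v) v * (xic n (-((ε : ℤ) * (v * ((β + 1) / 2 + α)))) *
        bendSum n k u β v α ((ε : ℤ) * (u + v + α + β - k + 1))) := by
  rw [sum_mul_qchoose_add_eq_sum_antidiagonal hk, bendSum, Finset.mul_sum, Finset.mul_sum,
    Finset.mul_sum]
  refine Finset.sum_congr rfl fun ⟨i, j⟩ hp => ?_
  obtain rfl : i + j = k := mem_antidiagonal.mp hp
  dsimp only
  rcases le_or_gt j v with hjv | hvj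
  · obtain ⟨m, rfl⟩ := Nat.exists_eq_add_of_le hjv
    have hprod := qchoose_mul_qchoose_sub_eq_div hk hv (β + (j + m : ℕ))
    have hphase : xic n ((ε : ℤ) * (u * j - (j + m : ℕ) * ((β + 1) / 2 + α - j))) *
          xic n ((ε : ℤ) * ((α + β - (i + j : ℕ) + 1) * j)) =
        xic n (-((ε : ℤ) * ((j + m : ℕ) * ((β + 1) / 2 + α)))) *
          xic n (j * ((ε : ℤ) * (u + (j + m : ℕ) + α + β - (i + j : ℕ) + 1))) := by
      rw [← xic_add, ← xic_add]
      congr 1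
      ring
    rw [add_sub_cancel_right] at hprod
    rw [sum_neg_one_pow_mul_qchoose_mul_qchoose_mul_qchoose hv,
      show α + β - (i + j : ℕ) - α + (j + m : ℕ) = β + (j + m : ℕ) - (i + j : ℕ) by ring]
    linear_combination (-1) ^ j * qchoose n u i * qchoose n α j *
      (qchoose n (β + (j + m : ℕ)) (i + j) *
          qchoose n (β + (j + m : ℕ) - (i + j : ℕ)) m * hphase +
        xic n (-((ε : ℤ) * ((j + m : ℕ) * ((β + 1) / 2 + α)))) *
          xic n (j * ((ε : ℤ) * (u + (j + m : ℕ) + α + β - (i + j : ℕ) + 1))) * hprod)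
  · rw [Finset.sum_eq_zero, qchoose_natCast_eq_zero n hvj]
    · ring
    · intro q hq
      have hq : q.1 + q.2 = v := mem_antidiagonal.mp hq
      rw [qchoose_natCast_eq_zero n (by omega)]
      ring

lemma CG_eq_sum_antidiagonal {n k t : ℕ} (hk : k < n) (ht : t < n) {a b c : ℂ}
    (h : a + b - c = n - 1 - k) (u v : ℕ) :
    CG n a b c u v t = Complex.exp (Real.pi * Complex.I * (k - (n - 1)) / 2) *
      xic n (n * (v - t) + (v * (2 * b - v + 1) - u * (2 * a - u + 1)) / 2) *
      ((qchoose n (2 * c) t)⁻¹ * (qchoose n (2 * c) k * ∑ q ∈ antidiagonal t,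
        (-1) ^ q.1 * xic n ((q.1 - q.2) * ((2 * c - t + 1) / 2)) *
          qbin n (n - 1 - k) (u - q.1) * qchoose n (2 * a - u + q.1) q.1 *
          qchoose n (2 * b - v + q.2) q.2)) := by
  have hsign : (-1 : ℂ) ^ ((v : ℤ) - t) = xic n (n * (v - t)) := by
    have h := xic_mul_intCast (n := n) (by omega) ((v : ℤ) - t)
    push_cast at h
    exact h.symm
  rw [CG, hsign, xic_add, show c - a - b = k - (n - 1) by linear_combination -h, h,
    qbin_eq_qchoose ht (by ring), qbin_eq_qchoose hk (by linear_combination -h),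
    Finset.Nat.sum_antidiagonal_eq_sum_range_succ_mk]
  have hterm : ∀ z ∈ Finset.range (t + 1),
      (-1) ^ z * xic n ((2 * z - t) * (2 * c - t + 1) / 2) * qbin n (n - 1 - k) (u - z) *
          qbin n (2 * a - u + z) (2 * a - u) * qbin n (2 * b - v + (t - z)) (2 * b - v) =
        (-1) ^ z * xic n ((z - (t - z : ℕ)) * ((2 * c - t + 1) / 2)) * qbin n (n - 1 - k) (u - z) *
          qchoose n (2 * a - u + z) z * qchoose n (2 * b - v + (t - z : ℕ)) (t - z) := by
    intro z hz
    have hzt : z ≤ t := Finset.mem_range_succ_iff.mp hz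
    have hleft : qbin n (2 * a - u + z) (2 * a - u) = qchoose n (2 * a - u + z) z :=
      qbin_eq_qchoose (by omega) (by ring)
    have hright : qbin n (2 * b - v + (t - z : ℕ)) (2 * b - v) =
        qchoose n (2 * b - v + (t - z : ℕ)) (t - z) :=
      qbin_eq_qchoose (by omega) (by ring)
    rw [hleft, ← hright, Nat.cast_sub hzt,
      show (z - (t - z : ℂ)) * ((2 * c - t + 1) / 2) = (2 * z - t) * (2 * c - t + 1) / 2 by ring]
  rw [Finset.sum_congr rfl hterm]
  ring

lemma CG_compl_left_eq_bendSum {n u v t k : ℕ} (hu : u < n) (hv : v < n) (ht : t < n) (hk : k < n)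
    (huvt : u + v = t + k) (a : ℂ) {b : ℂ} (hb : qchoose n (2 * b) v ≠ 0) :
    CG n (n - 1 - a) (a + b - k) b (n - 1 - u) t v =
      Complex.exp (Real.pi * Complex.I * (k - (n - 1)) / 2) *
        (xic n (n * (t - v) + t * (2 * (a + b - k) - t + 1) / 2 -
            (n - 1 - u) * (n - 2 * a + u) / 2 - v * (2 * b - v + 1) / 2 - v * (2 * a - u)) *
          bendSum n k u (2 * b - v) v (2 * a - u) (2 * a + 2 * b - k + 1)) := by
  have huvt' : (u : ℂ) + v = t + k := by exact_mod_cast huvt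
  have hsum := qchoose_mul_sum_eq_qchoose_mul_bendSum hv hk 1 u (2 * a - u) (2 * b - v)
  simp only [Units.val_one, Int.cast_one, one_mul, sub_add_cancel] at hsum
  rw [CG_eq_sum_antidiagonal hk hv (by ring), natCast_compl hu]
  have hterm : ∀ q ∈ antidiagonal v,
      (-1) ^ q.1 * xic n ((q.1 - q.2) * ((2 * b - v + 1) / 2)) *
          qbin n (n - 1 - k) (n - 1 - u - q.1) *
          qchoose n (2 * (n - 1 - a) - (n - 1 - u) + q.1) q.1 *
          qchoose n (2 * (a + b - k) - t + q.2) q.2 =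
        (-1) ^ q.1 * xic n ((q.1 - q.2) * ((2 * b - v + 1) / 2)) * qchoose n (u + q.1) k *
          qchoose n (2 * a - u) q.1 * qchoose n (2 * a - u + (2 * b - v) - k + q.2) q.2 := by
    rintro ⟨z, w⟩ hq
    have hq : z + w = v := mem_antidiagonal.mp hq
    have hbin : qbin n (n - 1 - k) (n - 1 - u - z) = qchoose n (u + z) k := by
      rw [← Nat.cast_add, ← qbin_compl_compl hk (by omega), Nat.cast_add, sub_add_eq_sub_sub]
    have hrefl : qchoose n (2 * (n - 1 - a) - (n - 1 - u) + z) z = qchoose n (2 * a - u) z := by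
      rw [← qchoose_natCast_add_sub (by omega)]
      congr 1
      ring
    dsimp only
    rw [hbin, hrefl, show 2 * (a + b - k) - (t : ℂ) = 2 * a - u + (2 * b - v) - k by
      linear_combination huvt']
  rw [Finset.sum_congr rfl hterm, hsum, inv_mul_cancel_left₀ hb, mul_assoc, ← mul_assoc (xic n _),
    ← xic_add,
    show (u : ℂ) + v + (2 * a - u) + (2 * b - v) - k + 1 = 2 * a + 2 * b - k + 1 by ring]
  congr 3
  ring

lemma CG_compl_right_eq_bendSum {n u v t k : ℕ} (hu : u < n) (hv : v < n) (ht : t < n) (hk : k < n)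
    (huvt : u + v = t + k) {a : ℂ} (b : ℂ) (ha : qchoose n (2 * a) u ≠ 0) :
    CG n (a + b - k) (n - 1 - b) a t (n - 1 - v) u =
      Complex.exp (Real.pi * Complex.I * (k - (n - 1)) / 2) *
        (xic n (n * (n - 1 - v) + (n - 1 - v) * (n - 2 * b + v) / 2 -
            t * (2 * (a + b - k) - t + 1) / 2 + u * (2 * a - u + 1) / 2 + u * (2 * b - v)) *
          bendSum n k v (2 * a - u) u (2 * b - v) (-(2 * a + 2 * b - k + 1))) := by
  have huvt' : (u : ℂ) + v = t + k := by exact_mod_cast huvt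
  have hsum := qchoose_mul_sum_eq_qchoose_mul_bendSum hu hk (-1) v (2 * b - v) (2 * a - u)
  simp only [Units.val_neg, Units.val_one, Int.cast_neg, Int.cast_one, neg_one_mul, neg_neg,
    sub_add_cancel] at hsum
  rw [CG_eq_sum_antidiagonal hk hu (by ring), natCast_compl hv,
    ← Finset.Nat.sum_antidiagonal_swap]
  have hterm : ∀ q ∈ antidiagonal u,
      (-1) ^ q.swap.1 * xic n ((q.swap.1 - q.swap.2) * ((2 * a - u + 1) / 2)) *
          qbin n (n - 1 - k) (t - q.swap.1) *
          qchoose n (2 * (a + b - k) - t + q.swap.1) q.swap.1 *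
          qchoose n (2 * (n - 1 - b) - (n - 1 - v) + q.swap.2) q.swap.2 =
        xic n (n * u) * ((-1) ^ q.1 * xic n (-((q.1 - q.2) * ((2 * a - u + 1) / 2))) *
          qchoose n (v + q.1) k * qchoose n (2 * b - v) q.1 *
          qchoose n (2 * b - v + (2 * a - u) - k + q.2) q.2) := by
    rintro ⟨z, w⟩ hq
    have hq : z + w = u := mem_antidiagonal.mp hq
    have hqC : (z : ℂ) + w = u := by exact_mod_cast hq
    have hsign : (-1 : ℂ) ^ w = xic n (n * u) * (-1) ^ z := by
      rw [xic_mul_natCast (by omega), neg_one_pow_eq_of_add_eq hq]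
    have hbin : qbin n (n - 1 - k) (t - w) = qchoose n (v + z) k := by
      rw [← Nat.cast_add, ← qbin_compl_sub hk (by omega), Nat.cast_add]
      congr 1
      linear_combination -hqC - huvt'
    have hrefl : qchoose n (2 * (n - 1 - b) - (n - 1 - v) + z) z = qchoose n (2 * b - v) z := by
      rw [← qchoose_natCast_add_sub (by omega)]
      congr 1
      ring
    simp only [Prod.fst_swap, Prod.snd_swap]
    rw [hbin, hrefl, hsign, show 2 * (a + b - k) - (t : ℂ) = 2 * b - v + (2 * a - u) - k by
      linear_combination huvt', ← neg_sub (z : ℂ), neg_mul]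
    ring
  rw [Finset.sum_congr rfl hterm, ← Finset.mul_sum, mul_left_comm (qchoose n (2 * a) k), hsum,
    mul_left_comm _ (xic n (n * u)), inv_mul_cancel_left₀ ha, mul_assoc,
    ← mul_assoc (xic n (n * u)), ← mul_assoc (xic n _), ← xic_add, ← xic_add,
    show (v : ℂ) + u + (2 * b - v) + (2 * a - u) - k + 1 = 2 * a + 2 * b - k + 1 by ring]
  congr 3
  ring

theorem CG_bend_identity_general {n : ℕ} {a b c : ℂ} {u v t : ℕ} (hu : u < n) (hv : v < n)
    (ht : t < n) (ha : qbin n (2 * a) (2 * a - u) ≠ 0) (hb : qbin n (2 * b) (2 * b - v) ≠ 0)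
    (habc : InZn n (a + b - c)) (huvt : (u : ℂ) + v - t = a + b - c) :
    CG n (n - 1 - a) c b (n - 1 - u) t v * xic n (-a * (n - 1)) * xic n ((n - 1) * u) =
      CG n c (n - 1 - b) a t (n - 1 - v) u * xic n (-(n - 1 - b) * (n - 1)) *
        xic n ((n - 1) * (n - 1 - v)) := by
  obtain ⟨k, hk, hk'⟩ := habc
  obtain rfl : c = a + b - k := by linear_combination -hk'
  have htC : (t : ℂ) = u + v - k := by linear_combination -huvt
  have huvt : u + v = t + k := by
    have : (u : ℂ) + v = t + k := by rw [htC]; ring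
    exact_mod_cast this
  have hn : n ≠ 0 := by omega
  rw [qbin_eq_qchoose hu (sub_sub_cancel _ _)] at ha
  rw [qbin_eq_qchoose hv (sub_sub_cancel _ _)] at hb
  have hphase : xic n (n * (t - v) + t * (2 * (a + b - k) - t + 1) / 2 -
          (n - 1 - u) * (n - 2 * a + u) / 2 - v * (2 * b - v + 1) / 2 - v * (2 * a - u)) *
        xic n (-a * (n - 1)) * xic n ((n - 1) * u) =
      xic n (n * (n - 1 - v) + (n - 1 - v) * (n - 2 * b + v) / 2 -
          t * (2 * (a + b - k) - t + 1) / 2 + u * (2 * a - u + 1) / 2 + u * (2 * b - v)) *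
        xic n (n * k) * xic n (-(k * (2 * a + 2 * b - k + 1))) *
        xic n (-(n - 1 - b) * (n - 1)) * xic n ((n - 1) * (n - 1 - v)) := by
    simp only [← xic_add]
    rw [← xic_add_two_mul_intCast hn _ (n - 1 - t)]
    congr 1
    push_cast
    rw [htC]
    ring
  rw [CG_compl_left_eq_bendSum hu hv ht hk huvt a hb,
    CG_compl_right_eq_bendSum hu hv ht hk huvt b ha, bendSum_swap, ← xic_mul_natCast hn k]
  linear_combination Complex.exp (Real.pi * Complex.I * (k - (n - 1)) / 2) *
    bendSum n k u (2 * b - v) v (2 * a - u) (2 * a + 2 * b - k + 1) * hphase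

theorem CG_bend_identity (n : ℕ) (hn : 2 ≤ n) (a b c : ℂ)
    (ha : NotHalfInt a) (hb : NotHalfInt b) (hc : NotHalfInt c)
    (habc : InZn n (a + b - c)) (u v t : ℕ)
    (hu : u ≤ n - 1) (hv : v ≤ n - 1) (ht : t ≤ n - 1)
    (huvt : (u : ℂ) + (v : ℂ) - (t : ℂ) = a + b - c) :
    CG n ((n : ℂ) - 1 - a) c b (n - 1 - u) t v * xic n (-a * ((n : ℂ) - 1)) *
        xic n (((n : ℂ) - 1) * (u : ℂ))
      = CG n c ((n : ℂ) - 1 - b) a t (n - 1 - v) u *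
          xic n (-((n : ℂ) - 1 - b) * ((n : ℂ) - 1)) *
          xic n (((n : ℂ) - 1) * ((n : ℂ) - 1 - (v : ℂ))) :=
  CG_bend_identity_general (by omega) (by omega) (by omega)
    (qbin_ne_zero_of_notHalfInt (by omega) ha) (qbin_ne_zero_of_notHalfInt (by omega) hb) habc huvt

end
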